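/- Let t₀ > 0 and set E₁ := {α ∈ (ℤ_{≥0})ⁿ : Σ_{j=1}^n (α_j+1)/p_j = 1} (a finite set). Let f be a holomorphic function on the polydisc {ψ < −t₀} of the form f(w) = Σ_{α ∈ E₁} b_α w^α + g₀(w), where b_α ∈ ℂ and g₀ is a holomorphic function on {ψ < −t₀} such that |g₀|² e^{−ψ} is Lebesgue integrable on some neighborhood of the origin. Then lim_{t→+∞} e^{t} ∫_{{ψ < −t}} |f|² dλ_n = Σ_{α ∈ E₁} |b_α|² πⁿ / Π_{j=1}^n (α_j+1). -/

import Mathlib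

open MeasureTheory Filter

/-- `psi p w = max_j 2 p_j log |w_j|`. -/
noncomputable def psi {n : ℕ} (p : Fin n → ℝ) (w : Fin n → ℂ) : ℝ :=
  ⨆ j, 2 * p j * Real.log ‖w j‖

/-- The polydisc `{ψ < s} = Π_j {|w_j| < e^{s/(2 p_j)}}`. -/
noncomputable def polydisc {n : ℕ} (p : Fin n → ℝ) (s : ℝ) : Set (Fin n → ℂ) :=
  {w | ∀ j, ‖w j‖ < Real.exp (s / (2 * p j))}

/-- `qExp p α = Σ_j (α_j + 1) / p_j`. -/
noncomputable def qExp {n : ℕ} (p : Fin n → ℝ) (α : Fin n → ℕ) : ℝ :=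
  ∑ j, ((α j : ℝ) + 1) / p j

/-!
Distinct monomials are orthogonal in `L²` of any polydisc centred at the origin, and on `{ψ < -t}`
the squared norm of `w ^ α` is `exp (-t * qExp p α) * π ^ n / ∏ j, (α j + 1)`. Hence for the
monomials with `qExp p α = 1` the factor `exp t` cancels the decay exactly. The remainder disappears
because `exp t ≤ exp (-ψ)` on `{ψ < -t}`: the rescaled integral of `‖g₀‖ ^ 2` is at most the mass of
a finite measure on sublevel sets which shrink to the empty set. Minkowski's inequality
for the rescaled `L²` seminorms then shows that adding `g₀` does not affect the limit.
-/

open Metric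
open scoped Topology ENNReal ComplexConjugate

section Monomials

lemma integral_ball_norm_pow {E : Type*} [NormedAddCommGroup E] [NormedSpace ℝ E]
    [FiniteDimensional ℝ E] [Nontrivial E] [MeasurableSpace E] [BorelSpace E]
    (μ : Measure E) [μ.IsAddHaarMeasure] {r : ℝ} (hr : 0 ≤ r) (k : ℕ) :
    ∫ x in ball (0 : E) r, ‖x‖ ^ k ∂μ =
      Module.finrank ℝ E * μ.real (ball 0 1) *
        (r ^ (Module.finrank ℝ E + k) / (Module.finrank ℝ E + k)) := by
  set d := Module.finrank ℝ E
  have hd : 0 < d := Module.finrank_pos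
  have hradial (x : E) : (ball (0 : E) r).indicator (‖·‖ ^ k) x =
      (Set.Iio r).indicator (· ^ k) ‖x‖ := by
    simp only [Set.indicator, mem_ball_zero_iff, Set.mem_Iio]
  have hpow (y : ℝ) : y ^ (d - 1) • (Set.Iio r).indicator (· ^ k) y =
      (Set.Iio r).indicator (· ^ (d + k - 1)) y := by
    simp only [Set.indicator, smul_eq_mul, mul_ite, mul_zero, ← pow_add,
      Nat.sub_add_comm (Nat.one_le_of_lt hd)]
  have hprimitive : ∫ y in (0 : ℝ)..r, y ^ (d + k - 1) = r ^ (d + k) / (d + k) := by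
    rw [integral_pow, ← Nat.cast_add_one, Nat.sub_add_cancel (by omega), zero_pow (by omega),
      sub_zero, Nat.cast_add]
  calc ∫ x in ball (0 : E) r, ‖x‖ ^ k ∂μ
      = ∫ x, (Set.Iio r).indicator (· ^ k) ‖x‖ ∂μ := by
        rw [← integral_indicator measurableSet_ball]
        exact integral_congr_ae (ae_of_all _ hradial)
    _ = d * μ.real (ball 0 1) * ∫ y in Set.Ioi 0, (Set.Iio r).indicator (· ^ (d + k - 1)) y := by
        simp_rw [integral_fun_norm_addHaar, nsmul_eq_mul, smul_eq_mul, ← mul_assoc, ← hpow,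
          smul_eq_mul, d]
    _ = d * μ.real (ball 0 1) * (r ^ (d + k) / (d + k)) := by
        rw [setIntegral_indicator measurableSet_Iio, Set.Ioi_inter_Iio,
          ← integral_Ioc_eq_integral_Ioo, ← intervalIntegral.integral_of_le hr, hprimitive]

lemma integral_ball_norm_pow_sq {r : ℝ} (hr : 0 ≤ r) (a : ℕ) :
    ∫ z in ball (0 : ℂ) r, ‖z ^ a‖ ^ 2 = Real.pi * r ^ (2 * (a + 1)) / (a + 1) := by
  simp_rw [norm_pow, ← pow_mul]
  rw [integral_ball_norm_pow volume hr, Complex.finrank_real_complex, measureReal_def,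
    Complex.volume_ball]
  simp only [Nat.cast_ofNat, ENNReal.ofReal_one, one_pow, one_mul, ENNReal.coe_toReal,
    NNReal.coe_real_pi, Nat.cast_mul]
  field_simp
  ring

-- A rotation under which the integrand changes sign preserves the disc.
lemma integral_ball_pow_mul_conj_pow_eq_zero (r : ℝ) {a b : ℕ} (hab : a ≠ b) :
    ∫ z in ball (0 : ℂ) r, z ^ a * conj (z ^ b) = 0 := by
  have hab' : (a : ℂ) - b ≠ 0 := sub_ne_zero.2 (Nat.cast_injective.ne hab)
  obtain ⟨u, hu⟩ : ∃ u : Circle, (u : ℂ) ^ a * conj ((u : ℂ) ^ b) = -1 := by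
    refine ⟨Circle.exp (Real.pi / (a - b)), ?_⟩
    rw [map_pow, ← Circle.coe_inv_eq_conj, ← Circle.exp_neg, Circle.coe_exp, Circle.coe_exp,
      ← Complex.exp_nat_mul, ← Complex.exp_nat_mul, ← Complex.exp_add, ← Complex.exp_pi_mul_I]
    congr 1
    push_cast
    field_simp
    ring
  have hrot := ((rotation u).measurePreserving.restrict_preimage
    (measurableSet_ball (x := (0 : ℂ)) (ε := r))).integral_comp
    (rotation u).toHomeomorph.measurableEmbedding fun z ↦ z ^ a * conj (z ^ b)
  have hball : rotation u ⁻¹' ball 0 r = ball 0 r := by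
    rw [LinearIsometryEquiv.preimage_ball, map_zero]
  have hsign (z : ℂ) : rotation u z ^ a * conj (rotation u z ^ b) = -(z ^ a * conj (z ^ b)) := by
    rw [rotation_apply, mul_pow, mul_pow, map_mul]
    linear_combination (z ^ a * conj (z ^ b)) * hu
  rw [hball] at hrot
  simp_rw [hsign, integral_neg] at hrot
  exact self_eq_neg.1 hrot.symm

variable {ι : Type*} [Fintype ι]

lemma integral_pi_ball_monomial_mul_conj_eq_zero (r : ι → ℝ) {α β : ι → ℕ} (h : α ≠ β) :
    ∫ w in Set.univ.pi fun j ↦ ball (0 : ℂ) (r j),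
      (∏ j, w j ^ α j) * conj (∏ j, w j ^ β j) = 0 := by
  obtain ⟨j, hj⟩ := Function.ne_iff.1 h
  simp_rw [map_prod, ← Finset.prod_mul_distrib]
  rw [volume_pi, Measure.restrict_pi_pi,
    integral_fintype_prod_eq_prod (f := fun j (z : ℂ) ↦ z ^ α j * conj (z ^ β j))]
  exact Finset.prod_eq_zero (Finset.mem_univ j) (integral_ball_pow_mul_conj_pow_eq_zero _ hj)

lemma integral_pi_ball_norm_monomial_sq {r : ι → ℝ} (hr : ∀ j, 0 ≤ r j) (α : ι → ℕ) :
    ∫ w in Set.univ.pi fun j ↦ ball (0 : ℂ) (r j), ‖∏ j, w j ^ α j‖ ^ 2 =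
      ∏ j, Real.pi * r j ^ (2 * (α j + 1)) / (α j + 1) := by
  simp_rw [norm_prod, ← Finset.prod_pow]
  rw [volume_pi, Measure.restrict_pi_pi,
    integral_fintype_prod_eq_prod (f := fun j (z : ℂ) ↦ ‖z ^ α j‖ ^ 2)]
  exact Finset.prod_congr rfl fun j _ ↦ integral_ball_norm_pow_sq (hr j) (α j)

end Monomials

section SquareIntegrable

variable {X : Type*} [MeasurableSpace X] {μ : Measure X}

lemma integral_norm_sq_sum_of_pairwise_integral_inner_eq_zero {𝕜 E κ : Type*} [RCLike 𝕜]
    [NormedAddCommGroup E] [InnerProductSpace 𝕜 E] [Fintype κ] {F : κ → X → E}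
    (hF : ∀ i, MemLp (F i) 2 μ) (horth : Pairwise fun i k ↦ ∫ x, inner 𝕜 (F i x) (F k x) ∂μ = 0) :
    ∫ x, ‖∑ i, F i x‖ ^ 2 ∂μ = ∑ i, ∫ x, ‖F i x‖ ^ 2 ∂μ := by
  have hinner (i k) : Integrable (fun x ↦ inner 𝕜 (F i x) (F k x)) μ :=
    (L2.integrable_inner (𝕜 := 𝕜) (hF i).toLp (hF k).toLp).congr <| by
      filter_upwards [(hF i).coeFn_toLp, (hF k).coeFn_toLp] with x hi hk
      rw [hi, hk]
  have hself (i x) : inner 𝕜 (F i x) (F i x) = ((‖F i x‖ ^ 2 : ℝ) : 𝕜) := by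
    rw [inner_self_eq_norm_sq_to_K, RCLike.ofReal_pow]
  apply RCLike.ofReal_injective (K := 𝕜)
  calc ((∫ x, ‖∑ i, F i x‖ ^ 2 ∂μ : ℝ) : 𝕜)
      = ∫ x, ∑ i, ∑ k, inner 𝕜 (F i x) (F k x) ∂μ := by
        rw [← integral_ofReal]
        simp_rw [RCLike.ofReal_pow, ← inner_self_eq_norm_sq_to_K (𝕜 := 𝕜), sum_inner, inner_sum]
    _ = ∑ i, ∑ k, ∫ x, inner 𝕜 (F i x) (F k x) ∂μ := by
        rw [integral_finsetSum _ fun i _ ↦ integrable_finsetSum _ fun k _ ↦ hinner i k]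
        exact Finset.sum_congr rfl fun i _ ↦ integral_finsetSum _ fun k _ ↦ hinner i k
    _ = ∑ i, ∫ x, inner 𝕜 (F i x) (F i x) ∂μ :=
        Finset.sum_congr rfl fun i _ ↦ Fintype.sum_eq_single i fun k hk ↦ horth hk.symm
    _ = ((∑ i, ∫ x, ‖F i x‖ ^ 2 ∂μ : ℝ) : 𝕜) := by
        simp_rw [hself, integral_ofReal, RCLike.ofReal_sum]

variable {E : Type*} [NormedAddCommGroup E]

lemma memLp_restrict_of_continuousOn_of_isCompact [TopologicalSpace X] [OpensMeasurableSpace X]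
    [IsFiniteMeasureOnCompacts μ] {f : X → E} {K : Set X} (hf : ContinuousOn f K)
    (hK : IsCompact K) (hK_meas : MeasurableSet K) (q : ℝ≥0∞) : MemLp f q (μ.restrict K) := by
  have : IsFiniteMeasure (μ.restrict K) := isFiniteMeasure_restrict.2 hK.measure_ne_top
  obtain ⟨C, hC⟩ := hK.exists_bound_of_continuousOn hf
  exact .of_bound (hf.aestronglyMeasurable_of_isCompact hK hK_meas) C <|
    (ae_restrict_iff' hK_meas).2 (ae_of_all _ hC)

lemma eLpNorm_two_eq_lintegral_rpow (f : X → E) (μ : Measure X) :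
    eLpNorm f 2 μ = (∫⁻ x, ENNReal.ofReal (‖f x‖ ^ 2) ∂μ) ^ (1 / 2 : ℝ) := by
  simp [eLpNorm_eq_lintegral_rpow_enorm_toReal, ENNReal.ofReal_pow]

variable {T : Type*} {l : Filter T} {ν : T → Measure X} {f g : X → E}

lemma tendsto_eLpNorm_add {q A : ℝ≥0∞} (hq : 1 ≤ q)
    (hf : ∀ᶠ t in l, AEStronglyMeasurable f (ν t))
    (hg : ∀ᶠ t in l, AEMeasurable (fun x ↦ ‖g x‖) (ν t))
    (hf_lim : Tendsto (fun t ↦ eLpNorm f q (ν t)) l (𝓝 A))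
    (hg_lim : Tendsto (fun t ↦ eLpNorm g q (ν t)) l (𝓝 0)) :
    Tendsto (fun t ↦ eLpNorm (f + g) q (ν t)) l (𝓝 A) := by
  have hlower : Tendsto (fun t ↦ eLpNorm f q (ν t) - eLpNorm g q (ν t)) l (𝓝 A) := by
    simpa using ENNReal.Tendsto.sub hf_lim hg_lim (.inr ENNReal.zero_ne_top)
  have hupper : Tendsto (fun t ↦ eLpNorm f q (ν t) + eLpNorm g q (ν t)) l (𝓝 A) := by
    simpa using hf_lim.add hg_lim
  refine tendsto_of_tendsto_of_tendsto_of_le_of_le' hlower hupper ?_ ?_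
  · filter_upwards [hf, hg] with t hft hgt
    rw [tsub_le_iff_right]
    calc eLpNorm f q (ν t) = eLpNorm ((fun x ↦ ‖f x‖ - ‖g x‖) + fun x ↦ ‖g x‖) q (ν t) := by
          rw [← eLpNorm_norm f]; congr 1; ext x; simp
      _ ≤ eLpNorm (fun x ↦ ‖f x‖ - ‖g x‖) q (ν t) + eLpNorm (fun x ↦ ‖g x‖) q (ν t) :=
          eLpNorm_add_le (hft.norm.sub hgt.aestronglyMeasurable) hgt.aestronglyMeasurable hq
      _ ≤ eLpNorm (f + g) q (ν t) + eLpNorm g q (ν t) := by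
          rw [eLpNorm_norm g]
          gcongr
          refine eLpNorm_mono fun x ↦ ?_
          simpa using abs_norm_sub_norm_le (f x) (-g x)
  · filter_upwards [hf, hg] with t hft hgt
    calc eLpNorm (f + g) q (ν t) ≤ eLpNorm ((fun x ↦ ‖f x‖) + fun x ↦ ‖g x‖) q (ν t) :=
          eLpNorm_mono_real fun x ↦ norm_add_le (f x) (g x)
      _ ≤ eLpNorm (fun x ↦ ‖f x‖) q (ν t) + eLpNorm (fun x ↦ ‖g x‖) q (ν t) :=
          eLpNorm_add_le hft.norm hgt.aestronglyMeasurable hq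
      _ = eLpNorm f q (ν t) + eLpNorm g q (ν t) := by rw [eLpNorm_norm, eLpNorm_norm]

lemma tendsto_lintegral_norm_sq_add {A : ℝ≥0∞}
    (hf : ∀ᶠ t in l, AEStronglyMeasurable f (ν t))
    (hg : ∀ᶠ t in l, AEMeasurable (fun x ↦ ‖g x‖) (ν t))
    (hf_lim : Tendsto (fun t ↦ ∫⁻ x, ENNReal.ofReal (‖f x‖ ^ 2) ∂ν t) l (𝓝 A))
    (hg_lim : Tendsto (fun t ↦ ∫⁻ x, ENNReal.ofReal (‖g x‖ ^ 2) ∂ν t) l (𝓝 0)) :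
    Tendsto (fun t ↦ ∫⁻ x, ENNReal.ofReal (‖f x + g x‖ ^ 2) ∂ν t) l (𝓝 A) := by
  have hf_lim' := hf_lim.ennrpow_const (1 / 2)
  have hg_lim' := hg_lim.ennrpow_const (1 / 2)
  simp_rw [← eLpNorm_two_eq_lintegral_rpow] at hf_lim' hg_lim'
  rw [ENNReal.zero_rpow_of_pos (by norm_num)] at hg_lim'
  have hadd := (tendsto_eLpNorm_add one_le_two hf hg hf_lim' hg_lim').ennrpow_const 2
  simp_rw [eLpNorm_two_eq_lintegral_rpow, ← ENNReal.rpow_mul] at hadd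
  simpa using hadd

end SquareIntegrable

section Sublevel

variable {X E : Type*} [MeasurableSpace X] [NormedAddCommGroup E] {μ : Measure X}
  {φ : X → ℝ} {g : X → E}

lemma aemeasurable_norm_of_aemeasurable_norm_sq_mul_exp (hφ : Measurable φ)
    (hg : AEMeasurable (fun x ↦ ‖g x‖ ^ 2 * Real.exp (-φ x)) μ) :
    AEMeasurable (fun x ↦ ‖g x‖) μ := by
  have hsq : AEMeasurable (fun x ↦ √(‖g x‖ ^ 2 * Real.exp (-φ x) * Real.exp (φ x))) μ :=
    (hg.mul hφ.exp.aemeasurable).sqrt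
  simpa only [mul_assoc, ← Real.exp_add, neg_add_cancel, Real.exp_zero, mul_one,
    Real.sqrt_sq (norm_nonneg _)] using hsq

lemma tendsto_exp_mul_setLIntegral_norm_sq_zero (hφ : Measurable φ)
    (hg : Integrable (fun x ↦ ‖g x‖ ^ 2 * Real.exp (-φ x)) μ) :
    Tendsto (fun t : ℝ ↦ ENNReal.ofReal (Real.exp t) *
      ∫⁻ x in {x | φ x < -t}, ENNReal.ofReal (‖g x‖ ^ 2) ∂μ) atTop (𝓝 0) := by
  let ν := μ.withDensity fun x ↦ ENNReal.ofReal (‖g x‖ ^ 2 * Real.exp (-φ x))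
  have hmeas (t : ℝ) : MeasurableSet {x | φ x < -t} := measurableSet_lt hφ measurable_const
  have : IsFiniteMeasure ν := isFiniteMeasure_withDensity_ofReal hg.hasFiniteIntegral
  -- The sublevel sets decrease to the empty set because `φ` is real-valued.
  have hempty : ⋂ t : ℝ, {x | φ x < -t} = ∅ :=
    Set.eq_empty_of_forall_notMem fun x hx ↦
      (neg_neg (φ x)).not_gt (Set.mem_iInter.1 hx (-φ x))
  have hν : Tendsto (fun t : ℝ ↦ ν {x | φ x < -t}) atTop (𝓝 0) := by
    have h := tendsto_measure_iInter_atTop (μ := ν) (fun t ↦ (hmeas t).nullMeasurableSet)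
      (fun s t hst x (hx : φ x < -t) ↦ hx.trans_le (neg_le_neg hst)) ⟨0, measure_ne_top ν _⟩
    rwa [hempty, measure_empty] at h
  refine tendsto_of_tendsto_of_tendsto_of_le_of_le tendsto_const_nhds hν (fun _ ↦ zero_le)
    fun t ↦ ?_
  beta_reduce
  rw [withDensity_apply _ (hmeas t), ← lintegral_const_mul' _ _ ENNReal.ofReal_ne_top]
  refine setLIntegral_mono' (hmeas t) fun x (hx : φ x < -t) ↦ ?_
  rw [← ENNReal.ofReal_mul (Real.exp_pos t).le, mul_comm]
  gcongr
  linarith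

lemma tendsto_exp_mul_setLIntegral_norm_sq_of_eventuallyEq_add {l : Filter X} {A : ℝ≥0∞}
    {f P : X → E} (hφ : Measurable φ) (hφl : Tendsto (fun t : ℝ ↦ {x | φ x < -t}) atTop l.smallSets)
    (hP : AEStronglyMeasurable P μ) (hf : f =ᶠ[l] P + g)
    (hg : IntegrableAtFilter (fun x ↦ ‖g x‖ ^ 2 * Real.exp (-φ x)) l μ)
    (hP_lim : Tendsto (fun t : ℝ ↦ ENNReal.ofReal (Real.exp t) *
      ∫⁻ x in {x | φ x < -t}, ENNReal.ofReal (‖P x‖ ^ 2) ∂μ) atTop (𝓝 A)) :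
    Tendsto (fun t : ℝ ↦ ENNReal.ofReal (Real.exp t) *
      ∫⁻ x in {x | φ x < -t}, ENNReal.ofReal (‖f x‖ ^ 2) ∂μ) atTop (𝓝 A) := by
  obtain ⟨U, hU, hgU⟩ := hg
  have hsub := tendsto_smallSets_iff.1 hφl
  let ν (t : ℝ) := ENNReal.ofReal (Real.exp t) • μ.restrict {x | φ x < -t}
  have hν (F : X → ℝ≥0∞) (t : ℝ) : ∫⁻ x, F x ∂ν t =
      ENNReal.ofReal (Real.exp t) * ∫⁻ x in {x | φ x < -t}, F x ∂μ := lintegral_smul_measure ..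
  have hg_meas : ∀ᶠ t in atTop, AEMeasurable (fun x ↦ ‖g x‖) (ν t) :=
    (hsub U hU).mono fun t ht ↦ ((aemeasurable_norm_of_aemeasurable_norm_sq_mul_exp hφ
      hgU.aemeasurable).mono_set ht).smul_measure _
  have hg_lim : Tendsto (fun t ↦ ∫⁻ x, ENNReal.ofReal (‖g x‖ ^ 2) ∂ν t) atTop (𝓝 0) := by
    refine (tendsto_exp_mul_setLIntegral_norm_sq_zero hφ hgU).congr' ?_
    filter_upwards [hsub U hU] with t ht
    rw [hν, Measure.restrict_restrict_of_subset ht]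
  simp_rw [← hν] at hP_lim ⊢
  have hP_meas (t : ℝ) : AEStronglyMeasurable P (ν t) := hP.restrict.smul_measure _
  refine (tendsto_lintegral_norm_sq_add (.of_forall hP_meas) hg_meas hP_lim hg_lim).congr' ?_
  filter_upwards [hsub _ hf] with t ht
  rw [hν, hν, setLIntegral_congr_fun (measurableSet_lt hφ measurable_const) fun x hx ↦ ?_]
  rw [show f x = P x + g x from ht hx]

end Sublevel

section MonomialSums

variable {ι E : Type*} [Fintype ι] [NormedAddCommGroup E]

lemma memLp_pi_ball_of_continuous {F : (ι → ℂ) → E} (hF : Continuous F) (r : ι → ℝ)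
    (q : ℝ≥0∞) : MemLp F q (volume.restrict (Set.univ.pi fun j ↦ ball (0 : ℂ) (r j))) :=
  (memLp_restrict_of_continuousOn_of_isCompact hF.continuousOn
    (isCompact_univ_pi fun j ↦ isCompact_closedBall 0 (r j))
    (.univ_pi fun _ ↦ measurableSet_closedBall) q).mono_measure
    (Measure.restrict_mono (Set.pi_mono fun _ _ ↦ ball_subset_closedBall) le_rfl)

lemma integral_pi_ball_norm_sq_sum_monomial_smul {κ : Type*} [Fintype κ] [InnerProductSpace ℂ E]
    {r : ι → ℝ} {α : κ → ι → ℕ} (hr : ∀ j, 0 ≤ r j)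
    (hα : Function.Injective α) (b : κ → E) :
    ∫ w in Set.univ.pi fun j ↦ ball (0 : ℂ) (r j), ‖∑ i, (∏ j, w j ^ α i j) • b i‖ ^ 2 =
      ∑ i, ‖b i‖ ^ 2 * ∏ j, Real.pi * r j ^ (2 * (α i j + 1)) / (α i j + 1) := by
  have hLp (i : κ) := memLp_pi_ball_of_continuous (F := fun w : ι → ℂ ↦ (∏ j, w j ^ α i j) • b i)
    (by fun_prop) r 2
  have hinner (i k : κ) (w : ι → ℂ) :
      inner ℂ ((∏ j, w j ^ α i j) • b i) ((∏ j, w j ^ α k j) • b k) =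
        (∏ j, w j ^ α k j) * conj (∏ j, w j ^ α i j) * inner ℂ (b i) (b k) := by
    rw [inner_smul_left, inner_smul_right]
    ring
  rw [integral_norm_sq_sum_of_pairwise_integral_inner_eq_zero (𝕜 := ℂ) hLp fun i k hik ↦ by
    simp_rw [hinner, integral_mul_const]
    rw [integral_pi_ball_monomial_mul_conj_eq_zero r (hα.ne hik.symm), zero_mul]]
  simp_rw [norm_smul, mul_pow, integral_mul_const, integral_pi_ball_norm_monomial_sq hr, mul_comm]

end MonomialSums

section Psi

variable {n : ℕ} {p : Fin n → ℝ}

lemma isOpen_polydisc (p : Fin n → ℝ) (s : ℝ) : IsOpen (polydisc p s) := by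
  simp only [polydisc, Set.ofPred_forall]
  exact isOpen_iInter_of_finite fun j ↦ isOpen_lt (by fun_prop) continuous_const

lemma polydisc_mem_nhds_zero (p : Fin n → ℝ) (s : ℝ) : polydisc p s ∈ 𝓝 0 :=
  (isOpen_polydisc p s).mem_nhds fun j ↦ by
    simpa only [Pi.zero_apply, norm_zero] using Real.exp_pos _

lemma polydisc_eq_pi_ball (p : Fin n → ℝ) (s : ℝ) :
    polydisc p s = Set.univ.pi fun j ↦ ball (0 : ℂ) (Real.exp (s / (2 * p j))) := by
  ext w
  simp only [polydisc, Set.mem_ofPred_eq, Set.mem_univ_pi, mem_ball_zero_iff]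

lemma measurable_psi (p : Fin n → ℝ) : Measurable (psi p) :=
  Measurable.iSup fun _ ↦ by fun_prop

-- As `Real.log 0 = 0`, points on a coordinate hyperplane may leave the sublevel set.
lemma psi_lt_iff (hn : 0 < n) (hp : ∀ j, 0 < p j) {s : ℝ} (hs : s ≤ 0) (w : Fin n → ℂ) :
    psi p w < s ↔ w ∈ polydisc p s ∧ ∀ j, w j ≠ 0 := by
  have : Nonempty (Fin n) := ⟨⟨0, hn⟩⟩
  have hsup : psi p w < s ↔ ∀ j, 2 * p j * Real.log ‖w j‖ < s := by
    simp only [psi, ← Finset.sup'_univ_eq_ciSup, Finset.sup'_lt_iff, Finset.mem_univ, true_imp_iff]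
  rw [hsup, polydisc, Set.mem_ofPred_eq, ← forall_and]
  refine forall_congr' fun j ↦ ?_
  have hpj : 0 < 2 * p j := mul_pos two_pos (hp j)
  rcases eq_or_ne (w j) 0 with hw | hw
  · simpa [hw] using hs
  · rw [← Real.log_lt_iff_lt_exp (norm_pos_iff.2 hw), lt_div_iff₀' hpj, and_iff_left hw]

lemma ae_forall_ne_zero (ι : Type*) [Fintype ι] : ∀ᵐ w : ι → ℂ, ∀ j, w j ≠ 0 :=
  ae_all_iff.2 fun j ↦ by
    simpa only [ae_iff, not_not, volume_pi] using
      Measure.pi_hyperplane (fun _ : ι ↦ (volume : Measure ℂ)) j 0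

lemma setOf_psi_lt_ae_eq_polydisc (hn : 0 < n) (hp : ∀ j, 0 < p j) {s : ℝ} (hs : s ≤ 0) :
    {w | psi p w < s} =ᵐ[volume] polydisc p s := by
  filter_upwards [ae_forall_ne_zero (Fin n)] with w hw
  exact propext ((psi_lt_iff hn hp hs w).trans (and_iff_left hw))

lemma tendsto_polydisc_neg_smallSets (hp : ∀ j, 0 < p j) :
    Tendsto (fun t ↦ polydisc p (-t)) atTop (𝓝 0).smallSets := by
  refine tendsto_smallSets_iff.2 fun U hU ↦ ?_
  obtain ⟨ε, hε, hεU⟩ := Metric.mem_nhds_iff.1 hU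
  have hradius (j : Fin n) : Tendsto (fun t : ℝ ↦ Real.exp (-t / (2 * p j))) atTop (𝓝 0) :=
    Real.tendsto_exp_atBot.comp
      (tendsto_neg_atTop_atBot.atBot_div_const (mul_pos two_pos (hp j)))
  filter_upwards [eventually_all.2 fun j ↦ (hradius j).eventually_lt_const hε] with t ht w hw
  exact hεU (mem_ball_zero_iff.2 ((pi_norm_lt_iff hε).2 fun j ↦ (hw j).trans (ht j)))

lemma tendsto_setOf_psi_lt_neg_smallSets (hn : 0 < n) (hp : ∀ j, 0 < p j) :
    Tendsto (fun t ↦ {w | psi p w < -t}) atTop (𝓝 0).smallSets := by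
  refine (tendsto_polydisc_neg_smallSets hp).smallSets_mono ?_
  filter_upwards [eventually_ge_atTop 0] with t ht w hw
  exact ((psi_lt_iff hn hp (neg_nonpos.2 ht) w).1 hw).1

lemma finite_setOf_qExp_eq (hp : ∀ j, 0 < p j) (c : ℝ) : {α | qExp p α = c}.Finite := by
  refine (Set.finite_Iic fun j ↦ ⌊c * p j⌋₊).subset fun α (hα : qExp p α = c) j ↦ ?_
  have hj : ((α j : ℝ) + 1) / p j ≤ c := by
    refine (Finset.single_le_sum (fun i _ ↦ ?_) (Finset.mem_univ j)).trans_eq hα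
    have := hp i
    positivity
  rw [div_le_iff₀ (hp j)] at hj
  exact Nat.le_floor (by linarith)

lemma prod_exp_div_pow (hp : ∀ j, 0 < p j) (s : ℝ) (α : Fin n → ℕ) :
    ∏ j, Real.exp (s / (2 * p j)) ^ (2 * (α j + 1)) = Real.exp (s * qExp p α) := by
  simp_rw [← Real.exp_nat_mul, ← Real.exp_sum, qExp, Finset.mul_sum]
  congr! 2 with j
  have := (hp j).ne'
  push_cast
  field_simp

variable {E : Type*} [NormedAddCommGroup E] [InnerProductSpace ℂ E]

lemma setLIntegral_psi_lt_norm_sq_sum_monomial_smul {κ : Type*} [Fintype κ] (hn : 0 < n)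
    (hp : ∀ j, 0 < p j) {s : ℝ} (hs : s ≤ 0) {α : κ → Fin n → ℕ} (hα : Function.Injective α)
    (b : κ → E) :
    ∫⁻ w in {w | psi p w < s}, ENNReal.ofReal (‖∑ i, (∏ j, w j ^ α i j) • b i‖ ^ 2) =
      ∑ i, ENNReal.ofReal (Real.exp (s * qExp p (α i))) *
        ENNReal.ofReal (‖b i‖ ^ 2 * Real.pi ^ n / ∏ j, ((α i j : ℝ) + 1)) := by
  have hLp := memLp_pi_ball_of_continuous (F := fun w ↦ ∑ i, (∏ j, w j ^ α i j) • b i)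
    (by fun_prop) (fun j ↦ Real.exp (s / (2 * p j))) 2
  rw [setLIntegral_congr (setOf_psi_lt_ae_eq_polydisc hn hp hs), polydisc_eq_pi_ball,
    ← ofReal_integral_eq_lintegral_ofReal (hLp.integrable_norm_pow two_ne_zero)
      (ae_of_all _ fun w ↦ by positivity),
    integral_pi_ball_norm_sq_sum_monomial_smul (fun j ↦ (Real.exp_pos _).le) hα,
    ENNReal.ofReal_sum_of_nonneg fun i _ ↦ by positivity]
  refine Finset.sum_congr rfl fun i _ ↦ ?_
  rw [← ENNReal.ofReal_mul (Real.exp_pos _).le, Finset.prod_div_distrib, Finset.prod_mul_distrib,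
    prod_exp_div_pow hp, Finset.prod_const, Finset.card_univ, Fintype.card_fin]
  congr 1
  ring

lemma exp_mul_setLIntegral_psi_lt_neg_norm_sq_tsum_monomial_smul (hn : 0 < n)
    (hp : ∀ j, 0 < p j) {t : ℝ} (ht : 0 ≤ t) (b : (Fin n → ℕ) → E) :
    ENNReal.ofReal (Real.exp t) * ∫⁻ w in {w | psi p w < -t}, ENNReal.ofReal
        (‖∑' α : {α : Fin n → ℕ // qExp p α = 1}, (∏ j, w j ^ α.1 j) • b α.1‖ ^ 2) =
      ∑' α : {α : Fin n → ℕ // qExp p α = 1},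
        ENNReal.ofReal (‖b α.1‖ ^ 2 * Real.pi ^ n / ∏ j, ((α.1 j : ℝ) + 1)) := by
  have : Fintype {α // qExp p α = 1} := (finite_setOf_qExp_eq hp 1).fintype
  simp_rw [tsum_fintype]
  rw [setLIntegral_psi_lt_norm_sq_sum_monomial_smul hn hp (neg_nonpos.2 ht)
    Subtype.val_injective fun α ↦ b α.1, Finset.mul_sum]
  refine Finset.sum_congr rfl fun α _ ↦ ?_
  rw [α.2, mul_one, ← mul_assoc, ← ENNReal.ofReal_mul (Real.exp_pos t).le, ← Real.exp_add,
    add_neg_cancel, Real.exp_zero, ENNReal.ofReal_one, one_mul]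

lemma continuous_tsum_monomial_smul (hp : ∀ j, 0 < p j) (b : (Fin n → ℕ) → E) (c : ℝ) :
    Continuous fun w : Fin n → ℂ ↦
      ∑' α : {α : Fin n → ℕ // qExp p α = c}, (∏ j, w j ^ α.1 j) • b α.1 := by
  have : Fintype {α // qExp p α = c} := (finite_setOf_qExp_eq hp c).fintype
  simp_rw [tsum_fintype]
  fun_prop

end Psi

theorem stmt_7_general {n : ℕ} (hn : 0 < n) {p : Fin n → ℝ} (hp : ∀ j, 0 < p j)
    {E : Type*} [NormedAddCommGroup E] [InnerProductSpace ℂ E]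
    {f g₀ : (Fin n → ℂ) → E} {b : (Fin n → ℕ) → E}
    (hform : ∀ᶠ w in 𝓝 0,
      f w = (∑' α : {α : Fin n → ℕ // qExp p α = 1}, (∏ j, w j ^ α.1 j) • b α.1) + g₀ w)
    (hint : IntegrableAtFilter (fun w ↦ ‖g₀ w‖ ^ 2 * Real.exp (-psi p w)) (𝓝 0)) :
    Tendsto (fun t : ℝ ↦ ENNReal.ofReal (Real.exp t) *
        ∫⁻ w in {w | psi p w < -t}, ENNReal.ofReal (‖f w‖ ^ 2)) atTop
      (𝓝 (∑' α : {α : Fin n → ℕ // qExp p α = 1},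
        ENNReal.ofReal (‖b α.1‖ ^ 2 * Real.pi ^ n / ∏ j, ((α.1 j : ℝ) + 1)))) := by
  refine tendsto_exp_mul_setLIntegral_norm_sq_of_eventuallyEq_add (measurable_psi p)
    (tendsto_setOf_psi_lt_neg_smallSets hn hp)
    (continuous_tsum_monomial_smul hp b 1).aestronglyMeasurable hform hint
    (tendsto_nhds_of_eventually_eq ?_)
  filter_upwards [eventually_ge_atTop 0] with t ht
  exact exp_mul_setLIntegral_psi_lt_neg_norm_sq_tsum_monomial_smul hn hp ht b

theorem stmt_7 (n : ℕ) (hn : 0 < n) (p : Fin n → ℝ) (hp : ∀ j, 0 < p j)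
    (t₀ : ℝ) (ht₀ : 0 < t₀) (f g₀ : (Fin n → ℂ) → ℂ) (b : (Fin n → ℕ) → ℂ)
    (hf : DifferentiableOn ℂ f (polydisc p (-t₀)))
    (hg₀ : DifferentiableOn ℂ g₀ (polydisc p (-t₀)))
    (hform : ∀ w ∈ polydisc p (-t₀),
      f w = (∑' α : {α : Fin n → ℕ // qExp p α = 1}, b α.1 * ∏ j, (w j) ^ (α.1 j)) + g₀ w)
    (hint : ∃ U ∈ nhds (0 : Fin n → ℂ), U ⊆ polydisc p (-t₀) ∧
      IntegrableOn (fun w => ‖g₀ w‖ ^ 2 * Real.exp (-psi p w)) U volume) :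
    Filter.Tendsto (fun t : ℝ =>
        ENNReal.ofReal (Real.exp t) *
          ∫⁻ w in {w : Fin n → ℂ | psi p w < -t}, ENNReal.ofReal (‖f w‖ ^ 2))
      Filter.atTop
      (nhds (∑' α : {α : Fin n → ℕ // qExp p α = 1},
        ENNReal.ofReal (‖b α.1‖ ^ 2 * Real.pi ^ n / ∏ j, ((α.1 j : ℝ) + 1)))) := by
  obtain ⟨U, hU, -, hint⟩ := hint
  refine stmt_7_general hn hp ?_ ⟨U, hU, hint⟩
  filter_upwards [polydisc_mem_nhds_zero p (-t₀)] with w hw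
  simpa only [smul_eq_mul, mul_comm] using hform w hw
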